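/- Fix 0 < p₀ < p̃₀ < 2 and let (q, p), respectively (q̃, p̃), be the global solution of (HS) with initial datum (0, p₀), respectively (0, p̃₀). Then: (i) if p₀ ∈ (0, √2), then q(t) < q̃(t) for all t ∈ (0, 𝒯(p₀)/2]; (ii) if p₀ ∈ [√2, 2), then q(t) < q̃(t) for all t ∈ (0, +∞). -/

import Mathlib

open Real Set Filter MeasureTheory
open scoped Topology

/-- The potential `g` from the Hamiltonian `H(x,p) = p²/2 + g(x)`. -/
noncomputable def g (x : ℝ) : ℝ := if |x| ≤ 1 then 1 - (1 - x ^ 2) ^ 4 else 1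

/-- The derivative of `g`. -/
noncomputable def g' (x : ℝ) : ℝ := if |x| ≤ 1 then 8 * x * (1 - x ^ 2) ^ 3 else 0

/-- `(q, p)` is a (global) solution of the Hamiltonian system (HS): `q̇ = p`, `ṗ = -g'(q)`. -/
def IsHSSol (q p : ℝ → ℝ) : Prop :=
  (∀ t : ℝ, HasDerivAt q (p t) t) ∧ (∀ t : ℝ, HasDerivAt p (-(g' (q t))) t)

/-- `F` is the flow of (HS): `F t q₀ p₀ = (q t, p t)` for the solution with data `(q₀, p₀)`. -/
def IsHSFlow (F : ℝ → ℝ → ℝ → ℝ × ℝ) : Prop :=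
  ∀ q₀ p₀ : ℝ,
    IsHSSol (fun t => (F t q₀ p₀).1) (fun t => (F t q₀ p₀).2) ∧ F 0 q₀ p₀ = (q₀, p₀)

/-- The set `([0,∞) × {2}) ∪ ({0} × (0,2])`, codomain of the map `Δ`. -/
def Dset : Set (ℝ × ℝ) := (Ici (0:ℝ) ×ˢ ({2} : Set ℝ)) ∪ ({(0:ℝ)} ×ˢ Ioc (0:ℝ) 2)

/-- `T` is the smallest positive period of `q`. -/
def IsSmallestPeriod (q : ℝ → ℝ) (T : ℝ) : Prop :=
  0 < T ∧ Function.Periodic q T ∧ ∀ T' : ℝ, 0 < T' → Function.Periodic q T' → T ≤ T'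

/-- `T` is the period map `𝒯`, assigning to `p₀ ∈ (0, √2)` the smallest positive period of
the `q`-component of the solution of (HS) with initial datum `(0, p₀)`. -/
def IsPeriodMap (F : ℝ → ℝ → ℝ → ℝ × ℝ) (T : ℝ → ℝ) : Prop :=
  ∀ p₀ ∈ Ioo (0:ℝ) (Real.sqrt 2), IsSmallestPeriod (fun t => (F t 0 p₀).1) (T p₀)

/-- `Δ` associates to `(t,x)` the datum in `Dset` whose orbit stays positive on `(0,t)`
and reaches `x` at time `t`. -/
def IsDeltaMap (F : ℝ → ℝ → ℝ → ℝ × ℝ) (Δ : ℝ → ℝ → ℝ × ℝ) : Prop :=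
  ∀ t x : ℝ, 0 < t → 0 < x →
    Δ t x ∈ Dset ∧ (F t (Δ t x).1 (Δ t x).2).1 = x ∧
      ∀ s ∈ Ioo (0:ℝ) t, 0 < (F s (Δ t x).1 (Δ t x).2).1

/-- The solution `u` of the conservation law built from the flow `F` and the map `Δ`
(extended by `0` at `x = 0`). -/
noncomputable def usol (F : ℝ → ℝ → ℝ → ℝ × ℝ) (Δ : ℝ → ℝ → ℝ × ℝ) (t x : ℝ) : ℝ :=
  if 0 < x then (F t (Δ t x).1 (Δ t x).2).2
  else if x < 0 then -(F t (Δ t (-x)).1 (Δ t (-x)).2).2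
  else 0

lemma aux_m (y : ℝ) : HasDerivAt (fun y : ℝ => (max y 0)^4) (4 * (max y 0)^3) y := by
  rcases lt_trichotomy y 0 with h | h | h
  · have : (fun y : ℝ => (max y 0)^4) =ᶠ[𝓝 y] fun _ => (0:ℝ) := by
      filter_upwards [Iio_mem_nhds h] with z hz
      rw [max_eq_right (le_of_lt hz)]; norm_num
    rw [max_eq_right h.le]
    simpa using (hasDerivAt_const y (0:ℝ)).congr_of_eventuallyEq this
  · subst h
    have : HasDerivAt (fun y : ℝ => y^2) 0 0 := by simpa using hasDerivAt_pow 2 (0:ℝ)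
    rw [hasDerivAt_iff_isLittleO] at this ⊢
    simp only [max_self, sub_zero, smul_zero, ne_eq, OfNat.ofNat_ne_zero, not_false_eq_true, zero_pow, mul_zero] at this ⊢
    refine Asymptotics.IsBigO.trans_isLittleO ?_ this
    refine Asymptotics.IsBigO.of_bound 1 ?_
    filter_upwards [Iio_mem_nhds (show (0:ℝ) < 1 by norm_num)] with z hz
    simp only [mem_Iio] at hz
    rw [Real.norm_eq_abs, Real.norm_eq_abs, abs_of_nonneg (by positivity), abs_of_nonneg (by positivity), one_mul]
    rcases le_total z 0 with h | h
    · rw [max_eq_right h]; nlinarith [sq_nonneg z]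
    · rw [max_eq_left h]; exact pow_le_pow_of_le_one h hz.le (by norm_num)
  · have : (fun y : ℝ => (max y 0)^4) =ᶠ[𝓝 y] fun y => y^4 := by
      filter_upwards [Ioi_mem_nhds h] with z hz
      rw [max_eq_left (le_of_lt hz)]
    rw [max_eq_left h.le]
    simpa using (hasDerivAt_pow 4 y).congr_of_eventuallyEq this

lemma g_eq (x : ℝ) : g x = 1 - (max (1 - x^2) 0)^4 := by
  unfold g
  split_ifs with h
  · rw [max_eq_left]; have := (sq_le_one_iff_abs_le_one x).2 h; linarith
  · rw [max_eq_right]; · norm_num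
    have := mt (sq_le_one_iff_abs_le_one x).1 h; linarith

lemma g'_eq (x : ℝ) : g' x = 8 * x * (max (1 - x^2) 0)^3 := by
  unfold g'
  split_ifs with h
  · rw [max_eq_left]; have := (sq_le_one_iff_abs_le_one x).2 h; linarith
  · rw [max_eq_right]; · norm_num
    have := mt (sq_le_one_iff_abs_le_one x).1 h; linarith

lemma g_deriv (x : ℝ) : HasDerivAt g (g' x) x := by
  have h1 : HasDerivAt (fun x : ℝ => 1 - x^2) (-(2*x)) x := by
    simpa using (hasDerivAt_pow 2 x).const_sub 1
  have h2 := ((aux_m (1 - x^2)).comp x h1).const_sub 1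
  have : g = fun x => 1 - ((fun y : ℝ => (max y 0)^4) ∘ (fun x : ℝ => 1 - x^2)) x := by
    funext x; simp [g_eq]
  rw [this]
  refine HasDerivAt.congr_deriv (h2) ?_
  rw [g'_eq]; ring

lemma energy {q p : ℝ → ℝ} (h : IsHSSol q p) (t : ℝ) :
    p t ^ 2 / 2 + g (q t) = p 0 ^ 2 / 2 + g (q 0) := by
  have hd : ∀ t, HasDerivAt (fun t => p t ^ 2 / 2 + g (q t)) 0 t := by
    intro t
    have h1 := (((h.2 t).pow 2).div_const 2).add ((g_deriv (q t)).comp t (h.1 t))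
    refine HasDerivAt.congr_deriv (h1) ?_
    simp; ring
  exact is_const_of_deriv_eq_zero (fun t => (hd t).differentiableAt) (fun t => (hd t).deriv) t 0

lemma g'_lip (a b : ℝ) : |g' a - g' b| ≤ 100 * |a - b| := by
  have hc : ∀ x : ℝ, g' x = 8 * (max (-1) (min x 1)) * (1 - (max (-1) (min x 1))^2)^3 := by
    intro x
    unfold g'
    split_ifs with h
    · rw [abs_le] at h; rw [min_eq_left h.2, max_eq_right h.1]
    · rcases le_total x 1 with h1 | h1
      · have : x ≤ -1 := by
          by_contra h2; exact h (abs_le.2 ⟨by linarith, h1⟩)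
        rw [min_eq_left h1, max_eq_left this]; norm_num
      · rw [min_eq_right h1]; norm_num
  have hl : |max (-1) (min a 1) - max (-1) (min b 1)| ≤ |a - b| := by
    refine (abs_max_sub_max_le_max _ _ _ _).trans ?_
    simp only [sub_self, abs_zero]
    refine max_le (abs_nonneg _) ((abs_min_sub_min_le_max _ _ _ _).trans ?_)
    simp
  rw [hc a, hc b]
  have hA : max (-1) (min a 1) ∈ Icc (-1:ℝ) 1 := ⟨le_max_left _ _, max_le (by norm_num) (min_le_right _ _)⟩
  have hB : max (-1) (min b 1) ∈ Icc (-1:ℝ) 1 := ⟨le_max_left _ _, max_le (by norm_num) (min_le_right _ _)⟩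
  generalize max (-1) (min a 1) = A at *
  generalize max (-1) (min b 1) = B at *
  have key := (convex_Icc (-1:ℝ) 1).norm_image_sub_le_of_norm_hasDerivWithin_le
    (f := fun x => 8 * x * (1 - x^2)^3) (f' := fun x => 8 * ((1-x^2)^2 * (1 - 7*x^2))) (C := 100) (fun x hx => by
      have h1 : HasDerivAt (fun x : ℝ => 1 - x^2) (-(2*x)) x := by
        simpa using (hasDerivAt_pow 2 x).const_sub 1
      have h2 := (((hasDerivAt_id x).const_mul 8).mul (h1.pow 3))
      refine HasDerivAt.hasDerivWithinAt ?_
      refine HasDerivAt.congr_deriv (h2) ?_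
      simp; ring) (fun x hx => by
      have h0 : x^2 ≤ 1 := by nlinarith [hx.1, hx.2]
      have h0' := sq_nonneg x
      have e1 : (1-x^2)^2 ≤ 1 := by nlinarith
      have e2 := sq_nonneg (1-x^2)
      rw [Real.norm_eq_abs, abs_le]
      constructor <;> nlinarith) hB hA
  simp only [Real.norm_eq_abs] at key
  linarith

lemma HS_unique {q p q2 p2 : ℝ → ℝ} (h : IsHSSol q p) (h' : IsHSSol q2 p2)
    (h0 : q 0 = q2 0) (h1 : p 0 = p2 0) : q = q2 := by
  have := ODE_solution_unique_univ (v := fun _ (z : ℝ × ℝ) => (z.2, -(g' z.1))) (s := fun _ => univ)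
    (K := 100) (f := fun t => (q t, p t)) (g := fun t => (q2 t, p2 t)) (t₀ := 0) (fun t => by
      refine (LipschitzWith.of_dist_le_mul ?_).lipschitzOnWith
      intro x y
      rw [Prod.dist_eq, Prod.dist_eq]
      simp only [Real.dist_eq]
      refine max_le ?_ ?_
      · have := le_max_right |x.1 - y.1| |x.2 - y.2|
        have := abs_nonneg (x.2 - y.2)
        push_cast; linarith
      · have := le_max_left |x.1 - y.1| |x.2 - y.2|
        have := g'_lip x.1 y.1
        rw [← abs_neg, show -(-(g' x.1) - -(g' y.1)) = g' x.1 - g' y.1 by ring]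
        push_cast; linarith)
    (fun t => ⟨(h.1 t).prodMk (h.2 t), mem_univ _⟩)
    (fun t => ⟨(h'.1 t).prodMk (h'.2 t), mem_univ _⟩) (by simp [h0, h1])
  funext t
  exact congrArg Prod.fst (congrFun this t)

lemma pos_right {f : ℝ → ℝ} {c : ℝ} (h0 : f 0 = 0) (hd : HasDerivAt f c 0) (hc : 0 < c) :
    ∃ ε > 0, ∀ s ∈ Ioo 0 ε, 0 < f s := by
  have h1 := hd.hasDerivWithinAt (s := Ioi 0)
  rw [hasDerivWithinAt_iff_tendsto_slope' (by simp)] at h1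
  have h2 := h1.eventually (lt_mem_nhds hc)
  rw [eventually_nhdsWithin_iff, Metric.eventually_nhds_iff] at h2
  obtain ⟨ε, he, h⟩ := h2
  refine ⟨ε, he, fun s hs => ?_⟩
  have := h (y := s) (by rw [Real.dist_eq, sub_zero, abs_of_pos hs.1]; exact hs.2) hs.1
  rw [slope_def_field, h0, sub_zero, sub_zero] at this
  exact (div_pos_iff_of_pos_right hs.1).1 this

lemma first_zero {f : ℝ → ℝ} {c t1 : ℝ} (h0 : f 0 = 0) (hd : HasDerivAt f c 0) (hc : 0 < c)
    (hf : Continuous f) (ht : 0 < t1) (h1 : f t1 ≤ 0) :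
    ∃ t0 ∈ Ioc 0 t1, f t0 = 0 ∧ ∀ s ∈ Ioo 0 t0, 0 < f s := by
  obtain ⟨ε, he, h⟩ := pos_right h0 hd hc
  have het : ε ≤ t1 := by
    by_contra hh; push Not at hh; linarith [h t1 ⟨ht, hh⟩]
  let S := Icc ε t1 ∩ {t | f t ≤ 0}
  have hS : IsCompact S := isCompact_Icc.inter_right (isClosed_le hf continuous_const)
  obtain ⟨t0, ht0, hmin⟩ := hS.exists_isLeast ⟨t1, ⟨het, le_rfl⟩, h1⟩
  have hpos : ∀ s ∈ Ioo 0 t0, 0 < f s := by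
    intro s hs
    by_contra hh
    push Not at hh
    by_cases hse : s < ε
    · linarith [h s ⟨hs.1, hse⟩]
    · have := hmin ⟨⟨not_lt.1 hse, hs.2.le.trans ht0.1.2⟩, hh⟩
      linarith [hs.2]
  have ht0p : 0 < t0 := he.trans_le ht0.1.1
  refine ⟨t0, ⟨ht0p, ht0.1.2⟩, le_antisymm ht0.2 ?_, hpos⟩
  refine ge_of_tendsto (hf.continuousAt.mono_left (nhdsWithin_le_nhds : 𝓝[<] t0 ≤ _)) ?_
  filter_upwards [Ioo_mem_nhdsLT ht0p] with s hs using (hpos s hs).le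

lemma deriv_end {f : ℝ → ℝ} {c t0 : ℝ} (ht : 0 < t0) (h0 : f t0 = 0) (hd : HasDerivAt f c t0)
    (hpos : ∀ s ∈ Ioo 0 t0, 0 < f s) : c ≤ 0 := by
  have h1 := hd.hasDerivWithinAt (s := Iio t0)
  rw [hasDerivWithinAt_iff_tendsto_slope' (by simp)] at h1
  refine le_of_tendsto h1 ?_
  filter_upwards [Ioo_mem_nhdsLT ht] with s hs
  rw [slope_def_field, h0, sub_eq_add_neg, add_comm]
  have := hpos s hs
  refine div_nonpos_of_nonneg_of_nonpos (by linarith) (by linarith [hs.2])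

lemma HS_cont {q p : ℝ → ℝ} (h : IsHSSol q p) : Continuous q :=
  continuous_iff_continuousAt.2 fun t => (h.1 t).continuousAt
lemma HS_contp {q p : ℝ → ℝ} (h : IsHSSol q p) : Continuous p :=
  continuous_iff_continuousAt.2 fun t => (h.2 t).continuousAt

lemma compare {q p qt pt : ℝ → ℝ} (h : IsHSSol q p) (ht : IsHSSol qt pt)
    (h0 : q 0 = 0) (ht0 : qt 0 = 0) (hp : 0 < p 0) (hlt : p 0 < pt 0) {b : ℝ}
    (hq : ∀ t ∈ Ioc 0 b, 0 ≤ q t) : ∀ t ∈ Ioc 0 b, q t < qt t := by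
  intro t1 ht1
  by_contra hcon
  push Not at hcon
  have hdd : ∀ t, HasDerivAt (fun t => qt t - q t) (pt t - p t) t := fun t => (ht.1 t).sub (h.1 t)
  obtain ⟨t0, ht0', hz, hpos⟩ := first_zero (f := fun t => qt t - q t) (by simp [h0, ht0]) (hdd 0)
    (by linarith) ((HS_cont ht).sub (HS_cont h)) ht1.1 (by linarith)
  have hle := deriv_end ht0'.1 hz (hdd t0) hpos
  have hW : ∀ t, HasDerivAt (fun t => q t * pt t - qt t * p t) (qt t * g' (q t) - q t * g' (qt t)) t := by
    intro t
    refine HasDerivAt.congr_deriv (((h.1 t).mul (ht.2 t)).sub ((ht.1 t).mul (h.2 t))) ?_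
    ring
  have hmono : MonotoneOn (fun t => q t * pt t - qt t * p t) (Icc 0 t0) := by
    refine monotoneOn_of_deriv_nonneg (convex_Icc _ _)
      (fun t _ => (hW t).continuousAt.continuousWithinAt)
      (fun t _ => (hW t).differentiableAt.differentiableWithinAt) ?_
    intro t hti
    rw [interior_Icc] at hti
    rw [(hW t).deriv, g'_eq, g'_eq]
    have a1 := hq t ⟨hti.1, by linarith [hti.2, ht0'.2, ht1.2]⟩
    have a2 := hpos t hti
    have a3 : (max (1 - qt t^2) 0)^3 ≤ (max (1 - q t^2) 0)^3 := by
      gcongr; linarith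
    have : 0 ≤ 8 * (q t * qt t) * ((max (1 - q t^2) 0)^3 - (max (1 - qt t^2) 0)^3) :=
      mul_nonneg (by have : 0 ≤ qt t := by linarith
                     positivity) (by linarith)
    nlinarith
  have hend : q t0 * pt t0 - qt t0 * p t0 ≤ 0 := by
    have e : qt t0 = q t0 := by simpa [sub_eq_zero] using hz
    have := hq t0 ⟨ht0'.1, ht0'.2.trans ht1.2⟩
    rw [e]; nlinarith
  have hzero : ∀ s ∈ Icc 0 t0, q s * pt s - qt s * p s = 0 := by
    intro s hs
    have b1 := hmono ⟨le_rfl, ht0'.1.le⟩ hs hs.1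
    have b2 := hmono hs ⟨ht0'.1.le, le_rfl⟩ hs.2
    simp only [h0, ht0] at b1 b2
    linarith
  obtain ⟨ε, he, hqe⟩ := pos_right h0 (h.1 0) hp
  have hq1 : ∀ᶠ s in 𝓝[>] (0:ℝ), q s < 1 :=
    (((HS_cont h).tendsto 0).mono_left nhdsWithin_le_nhds).eventually (gt_mem_nhds (by rw [h0]; norm_num))
  obtain ⟨s, ⟨hs1, hs2⟩, hs3⟩ := ((hq1.and (Ioo_mem_nhdsGT he)).and (Ioo_mem_nhdsGT ht0'.1)).exists
  have hder : qt s * g' (q s) - q s * g' (qt s) = 0 := by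
    refine (hW s).unique ((hasDerivAt_const s (0:ℝ)).congr_of_eventuallyEq ?_)
    filter_upwards [Icc_mem_nhds hs3.1 hs3.2] with r hr using hzero r hr
  rw [g'_eq, g'_eq] at hder
  have a1 := hqe s hs2
  have a2 := hpos s hs3
  have a4 : max (1 - qt s^2) 0 < max (1 - q s^2) 0 := by
    rw [max_eq_left (a := 1 - q s^2) (by nlinarith)]
    exact max_lt (by nlinarith) (by nlinarith)
  have a3 : (max (1 - qt s^2) 0)^3 < (max (1 - q s^2) 0)^3 := by
    gcongr
  have : 0 < 8 * (q s * qt s) * ((max (1 - q s^2) 0)^3 - (max (1 - qt s^2) 0)^3) :=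
      mul_pos (by have : 0 < qt s := by linarith
                  positivity) (by linarith)
  nlinarith

lemma half_period {q p : ℝ → ℝ} (h : IsHSSol q p) (h0 : q 0 = 0) (hp : 0 < p 0) {T : ℝ}
    (hT : IsSmallestPeriod q T) : ∀ t ∈ Ioc 0 (T/2), 0 ≤ q t := by
  obtain ⟨t0, ht0, hz, hpos⟩ := first_zero h0 (h.1 0) hp (HS_cont h) hT.1
    (by have := hT.2.1 0; rw [zero_add] at this; rw [this, h0])
  have hle := deriv_end ht0.1 hz (h.1 t0) hpos
  have hpt : p t0 = - p 0 := by
    have := energy h t0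
    rw [hz, h0] at this
    have : (p t0 - p 0) * (p t0 + p 0) = 0 := by linarith
    rcases mul_eq_zero.1 this with h | h <;> linarith
  have hneg : IsHSSol (fun t => - q (t + t0)) (fun t => - p (t + t0)) := by
    refine ⟨fun t => ((h.1 (t+t0)).comp_add_const t t0).neg, fun t => ?_⟩
    refine HasDerivAt.congr_deriv (((h.2 (t+t0)).comp_add_const t t0).neg) ?_
    rw [g'_eq, g'_eq]; ring
  have hu := HS_unique h hneg (by simp [h0, hz]) (by simp [hpt])
  have hper : Function.Periodic q (2 * t0) := by
    intro t
    have e1 := congrFun hu t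
    have e2 := congrFun hu (t + t0)
    rw [e1, e2, neg_neg]; congr 1; ring
  have hTle := hT.2.2 (2*t0) (by linarith [ht0.1]) hper
  intro t ht
  rcases eq_or_lt_of_le (show t ≤ t0 by linarith [ht.2]) with e | e
  · rw [e, hz]
  · exact (hpos t ⟨ht.1, e⟩).le

lemma escape {q p : ℝ → ℝ} (h : IsHSSol q p) (h0 : q 0 = 0) (hp : √2 ≤ p 0) :
    ∀ t, 0 < t → 0 ≤ q t := by
  intro t1 ht1
  have h20 : 0 < √2 := by positivity
  have hp2 : 2 ≤ p 0 ^ 2 := by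
    have := Real.sq_sqrt (show (0:ℝ) ≤ 2 by norm_num)
    nlinarith
  have g0 : g 0 = 0 := by rw [g_eq]; norm_num
  have hE : ∀ t, p t ^ 2 = p 0 ^ 2 - 2 + 2 * (max (1 - q t^2) 0)^4 := by
    intro t
    have := energy h t
    rw [h0, g0, g_eq] at this
    linarith
  by_contra hcon
  push Not at hcon
  obtain ⟨t0, ht0, hz, hpos⟩ := first_zero h0 (h.1 0) (by linarith) (HS_cont h) ht1 hcon.le
  obtain ⟨s, hs, hps⟩ := exists_hasDerivAt_eq_zero ht0.1 (HS_cont h).continuousOn (by rw [h0, hz]) (fun x _ => h.1 x)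
  have hEs := hE s
  rw [hps] at hEs
  have hm : (0:ℝ) ≤ (max (1 - q s^2) 0)^4 := by positivity
  have hp2' : p 0 ^ 2 = 2 := by nlinarith
  have hm0 : max (1 - q s^2) 0 = 0 := by
    have : (max (1 - q s^2) 0)^4 = 0 := by linarith
    exact pow_eq_zero_iff (by norm_num) |>.1 this
  have hqs : 1 ≤ q s := by
    have := max_eq_right_iff.1 hm0
    nlinarith [hpos s hs]
  obtain ⟨r, hr, hr1⟩ := intermediate_value_Icc hs.1.le (HS_cont h).continuousOn
    (show (1:ℝ) ∈ Icc (q 0) (q s) by rw [h0]; exact ⟨by norm_num, hqs⟩)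
  have hb : ∀ t, |p t| ≤ 8 * |1 - q t| := by
    intro t
    have e := hE t
    rw [hp2'] at e
    refine abs_le_of_sq_le_sq' ?_ (by positivity) |> abs_le.2
    rw [mul_pow, sq_abs, e]
    rcases le_total (1 - q t^2) 0 with hh | hh
    · rw [max_eq_right hh]; have := sq_nonneg (1 - q t); norm_num; positivity
    · rw [max_eq_left hh]
      have c1 : 1 - q t^2 ≤ 1 := by nlinarith [sq_nonneg (q t)]
      have c2 : (1 - q t^2)^4 ≤ (1 - q t^2)^2 := pow_le_pow_of_le_one hh c1 (by norm_num)
      have c3 : (1 - q t^2)^2 = (1 - q t)^2 * (1 + q t)^2 := by ring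
      have c4 : (1 + q t)^2 ≤ 4 := by
        have := abs_le.1 ((sq_le_one_iff_abs_le_one (q t)).1 (by linarith))
        nlinarith [this.1, this.2]
      nlinarith [sq_nonneg (1 - q t)]
  have hV : ∀ t, HasDerivAt (fun t => (1 - q t)^2 * exp (16 * t))
      ((2 * (1 - q t) * (- p t) + 16 * (1 - q t)^2) * exp (16 * t)) t := by
    intro t
    have d1 := ((h.1 t).const_sub 1).pow 2
    have d2 : HasDerivAt (fun t => exp (16 * t)) (exp (16*t) * 16) t := by
      simpa using ((hasDerivAt_id t).const_mul 16).exp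
    refine HasDerivAt.congr_deriv (d1.mul d2) ?_
    simp; ring
  have hmono : Monotone (fun t => (1 - q t)^2 * exp (16 * t)) := by
    refine monotone_of_deriv_nonneg (fun t => (hV t).differentiableAt) fun t => ?_
    rw [(hV t).deriv]
    refine mul_nonneg ?_ (exp_pos _).le
    have f1 : (1 - q t) * p t ≤ |1 - q t| * |p t| := by rw [← abs_mul]; exact le_abs_self _
    have f2 : |1 - q t| * |p t| ≤ |1 - q t| * (8 * |1 - q t|) :=
      mul_le_mul_of_nonneg_left (hb t) (abs_nonneg _)
    have f3 := sq_abs (1 - q t)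
    nlinarith
  have := hmono hr.1
  simp only [h0, hr1] at this
  norm_num at this

theorem stmt_7 (p₀ pt₀ : ℝ) (h0 : 0 < p₀) (h1 : p₀ < pt₀) (h2 : pt₀ < 2)
    (q p qt pt : ℝ → ℝ)
    (hsol : IsHSSol q p) (hq0 : q 0 = 0) (hp0 : p 0 = p₀)
    (hsolt : IsHSSol qt pt) (hqt0 : qt 0 = 0) (hpt0 : pt 0 = pt₀) :
    (∀ T : ℝ, p₀ < Real.sqrt 2 → IsSmallestPeriod q T →
      ∀ t ∈ Ioc (0:ℝ) (T / 2), q t < qt t) ∧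
    (Real.sqrt 2 ≤ p₀ → ∀ t : ℝ, 0 < t → q t < qt t) := by
  subst hp0 hpt0
  refine ⟨fun T _ hT => compare hsol hsolt hq0 hqt0 h0 h1 (half_period hsol hq0 h0 hT),
    fun hs t ht => ?_⟩
  exact compare hsol hsolt hq0 hqt0 h0 h1 (b := t)
    (fun s hs' => escape hsol hq0 hs s hs'.1) t ⟨ht, le_rfl⟩
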